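/- Suppose n = m. For any two-sided strategy-proof randomized matching mechanism f, there exists a randomized matching mechanism g that is two-sided strategy-proof and symmetric and satisfies max_{≻∈P} V(g(≻),≻) ≤ max_{≻∈P} V(f(≻),≻), where V(r,≻) denotes the stability violation of r at profile ≻. -/

import Mathlib

/-!
Exchange the two sides of the market, run `f`, and transpose the outcome: the resulting mechanism
is again feasible and two-sided strategy-proof, and its violation at `≻` is that of `f` at `≻↔`.
Swapping twice gives `f` back, so the midpoint `g` of `f` and its role swap is symmetric.
Feasibility and strategy-proofness are systems of linear inequalities, hence pass to the midpoint.
The violation is a sum of positive parts of affine functions of the matching, hence convex, so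
that of `g` at `≻` is at most the larger of the violations of `f` at `≻` and at `≻↔`.
-/

open Finset

/-- A preference profile: each student `s` has a ranking `p.1 s : Equiv.Perm (Fin m)`
(where `p.1 s c` is the rank student `s` gives to school `c`, lower rank = more preferred),
and each school `c` has a ranking `p.2 c` of the students (lower rank = more preferred). -/
abbrev Profile (n m : ℕ) :=
  (Fin n → Equiv.Perm (Fin m)) × (Fin m → Equiv.Perm (Fin n))

/-- A randomized matching: nonnegative entries, and (accounting for the implicit `∅`
row/column each summing to one) every row and column sums to at most one. -/
def IsRandMatching {n m : ℕ} (r : Fin n → Fin m → ℝ) : Prop :=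
  (∀ s c, 0 ≤ r s c) ∧ (∀ s, ∑ c, r s c ≤ 1) ∧ (∀ c, ∑ s, r s c ≤ 1)

/-- Stability violation of a randomized matching `r` at profile `p`. -/
def violation {n m : ℕ} (p : Profile n m) (r : Fin n → Fin m → ℝ) : ℝ :=
  ∑ s, ∑ c,
    max (1 - r s c
      - ∑ c' ∈ univ.filter (fun c' => p.1 s c' < p.1 s c), r s c'
      - ∑ s' ∈ univ.filter (fun s' => p.2 c s' < p.2 c s), r s' c) 0

/-- Two-sided strategy-proofness of a randomized matching mechanism. -/
def TwoSidedSP {n m : ℕ} (g : Profile n m → Fin n → Fin m → ℝ) : Prop :=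
  (∀ p : Profile n m, ∀ s : Fin n, ∀ q : Equiv.Perm (Fin m), ∀ c : Fin m,
    ∑ c' ∈ univ.filter (fun c' => p.1 s c' ≤ p.1 s c),
        g (Function.update p.1 s q, p.2) s c'
      ≤ ∑ c' ∈ univ.filter (fun c' => p.1 s c' ≤ p.1 s c), g p s c') ∧
  (∀ p : Profile n m, ∀ c : Fin m, ∀ q : Equiv.Perm (Fin n), ∀ s : Fin n,
    ∑ s' ∈ univ.filter (fun s' => p.2 c s' ≤ p.2 c s),
        g (p.1, Function.update p.2 c q) s' c
      ≤ ∑ s' ∈ univ.filter (fun s' => p.2 c s' ≤ p.2 c s), g p s' c)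

/-- The relabelled profile `≻^π`: student `πS s` gets student `s`'s old preference with
schools renamed by `πC`, and school `πC c` gets school `c`'s old preference with students
renamed by `πS`. -/
def relabel {n m : ℕ} (πS : Equiv.Perm (Fin n)) (πC : Equiv.Perm (Fin m))
    (p : Profile n m) : Profile n m :=
  (fun i => πC.symm.trans (p.1 (πS.symm i)),
   fun j => πS.symm.trans (p.2 (πC.symm j)))

/-- Anonymity of a mechanism. -/
def Anonymous {n m : ℕ} (g : Profile n m → Fin n → Fin m → ℝ) : Prop :=
  ∀ p : Profile n m, ∀ πS : Equiv.Perm (Fin n), ∀ πC : Equiv.Perm (Fin m), ∀ s c,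
    g p s c = g (relabel πS πC p) (πS s) (πC c)

/-- The role-swapped profile `≻↔` (students and schools exchange roles). -/
def swapProfile {n : ℕ} (p : Profile n n) : Profile n n := (p.2, p.1)

/-- Symmetry of a mechanism (for balanced markets). -/
def SymmetricMech {n : ℕ} (g : Profile n n → Fin n → Fin n → ℝ) : Prop :=
  ∀ p : Profile n n, ∀ i j, g p i j = g (swapProfile p) j i

section Convexity

lemma convexOn_sum {𝕜 E β ι : Type*} [Semiring 𝕜] [PartialOrder 𝕜] [AddCommMonoid E] [SMul 𝕜 E]
    [AddCommMonoid β] [PartialOrder β] [IsOrderedAddMonoid β] [Module 𝕜 β]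
    {s : Set E} (hs : Convex 𝕜 s) {t : Finset ι} {f : ι → E → β}
    (hf : ∀ i ∈ t, ConvexOn 𝕜 s (f i)) : ConvexOn 𝕜 s fun x => ∑ i ∈ t, f i x := by
  rw [← sum_fn]
  exact sum_induction f (ConvexOn 𝕜 s) (fun _ _ => ConvexOn.add) (convexOn_const 0 hs) hf

variable {n m : ℕ}

lemma convex_setOf_isRandMatching : Convex ℝ {r : Fin n → Fin m → ℝ | IsRandMatching r} := by
  rintro r ⟨hr_nonneg, hr_row, hr_col⟩ r' ⟨hr'_nonneg, hr'_row, hr'_col⟩ a b ha hb hab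
  refine ⟨fun s c => convex_Ici (0 : ℝ) (hr_nonneg s c) (hr'_nonneg s c) ha hb hab,
    fun s => ?_, fun c => ?_⟩ <;>
    simp only [Pi.add_apply, Pi.smul_apply, sum_add_distrib, ← smul_sum]
  · exact convex_Iic (1 : ℝ) (hr_row s) (hr'_row s) ha hb hab
  · exact convex_Iic (1 : ℝ) (hr_col c) (hr'_col c) ha hb hab

lemma convex_setOf_twoSidedSP :
    Convex ℝ {f : Profile n m → Fin n → Fin m → ℝ | TwoSidedSP f} := by
  rintro f ⟨hf_student, hf_school⟩ f' ⟨hf'_student, hf'_school⟩ a b ha hb -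
  refine ⟨fun p s q c => ?_, fun p c q s => ?_⟩ <;>
    simp only [Pi.add_apply, Pi.smul_apply, sum_add_distrib, ← smul_sum]
  · gcongr a • ?_ + b • ?_
    exacts [hf_student p s q c, hf'_student p s q c]
  · gcongr a • ?_ + b • ?_
    exacts [hf_school p c q s, hf'_school p c q s]

/-- The signed stability violation at the pair `(s, c)`, an affine function of the matching;
`violation` sums its positive parts. -/
def pairViolation (p : Profile n m) (s : Fin n) (c : Fin m) (r : Fin n → Fin m → ℝ) : ℝ :=
  1 - r s c
    - ∑ c' ∈ univ.filter (fun c' => p.1 s c' < p.1 s c), r s c'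
    - ∑ s' ∈ univ.filter (fun s' => p.2 c s' < p.2 c s), r s' c

lemma violation_eq_sum_pairViolation (p : Profile n m) (r : Fin n → Fin m → ℝ) :
    violation p r = ∑ s, ∑ c, max (pairViolation p s c r) 0 :=
  rfl

lemma pairViolation_add_smul (p : Profile n m) (s : Fin n) (c : Fin m)
    (r r' : Fin n → Fin m → ℝ) {a b : ℝ} (hab : a + b = 1) :
    pairViolation p s c (a • r + b • r') =
      a • pairViolation p s c r + b • pairViolation p s c r' := by
  simp only [pairViolation, Pi.add_apply, Pi.smul_apply, smul_eq_mul, sum_add_distrib,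
    ← mul_sum]
  linear_combination -hab

lemma convexOn_pairViolation (p : Profile n m) (s : Fin n) (c : Fin m) :
    ConvexOn ℝ Set.univ (pairViolation p s c) :=
  ⟨convex_univ, fun r _ r' _ _ _ _ _ hab => (pairViolation_add_smul p s c r r' hab).le⟩

lemma convexOn_violation (p : Profile n m) : ConvexOn ℝ Set.univ (violation p) := by
  have hpos (s : Fin n) (c : Fin m) :
      ConvexOn ℝ Set.univ fun r => max (pairViolation p s c r) 0 :=
    (convexOn_pairViolation p s c).sup (convexOn_const 0 convex_univ)
  rw [funext (violation_eq_sum_pairViolation p)]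
  exact convexOn_sum convex_univ fun s _ => convexOn_sum convex_univ fun c _ => hpos s c

end Convexity

section RoleSwap

variable {n m : ℕ}

lemma IsRandMatching.flip {r : Fin n → Fin m → ℝ} (hr : IsRandMatching r) :
    IsRandMatching (flip r) :=
  ⟨fun c s => hr.1 s c, hr.2.2, hr.2.1⟩

lemma pairViolation_flip (p : Profile m n) (c : Fin m) (s : Fin n) (r : Fin n → Fin m → ℝ) :
    pairViolation p c s (flip r) = pairViolation p.swap s c r :=
  sub_right_comm _ _ _

lemma violation_flip (p : Profile m n) (r : Fin n → Fin m → ℝ) :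
    violation p (flip r) = violation p.swap r := by
  simp only [violation_eq_sum_pairViolation, pairViolation_flip]
  exact sum_comm

/-- The role swap of a mechanism: exchange the two sides of the market, run the mechanism, and
transpose its outcome. The two sides may differ in size, so `Prod.swap` stands in for
`swapProfile`, with which it agrees on balanced markets. -/
def roleSwap (f : Profile n m → Fin n → Fin m → ℝ) : Profile m n → Fin m → Fin n → ℝ :=
  fun p => flip (f p.swap)

lemma TwoSidedSP.roleSwap {f : Profile n m → Fin n → Fin m → ℝ} (hf : TwoSidedSP f) :
    TwoSidedSP (roleSwap f) :=
  ⟨fun p => hf.2 p.swap, fun p => hf.1 p.swap⟩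

end RoleSwap

section Symmetrization

variable {n : ℕ} {f : Profile n n → Fin n → Fin n → ℝ}

/-- The symmetrization of a mechanism: the fair lottery between it and its role swap. -/
noncomputable def symmetrization (f : Profile n n → Fin n → Fin n → ℝ) :
    Profile n n → Fin n → Fin n → ℝ :=
  midpoint ℝ f (roleSwap f)

lemma symmetrization_apply (f : Profile n n → Fin n → Fin n → ℝ) (p : Profile n n) :
    symmetrization f p = midpoint ℝ (f p) (flip (f p.swap)) :=
  pi_midpoint_apply _ _ _

lemma isRandMatching_symmetrization (hf : ∀ p, IsRandMatching (f p)) (p : Profile n n) :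
    IsRandMatching (symmetrization f p) := by
  rw [symmetrization_apply]
  exact convex_setOf_isRandMatching.midpoint_mem (hf p) (hf p.swap).flip

lemma TwoSidedSP.symmetrization (hf : TwoSidedSP f) : TwoSidedSP (symmetrization f) :=
  convex_setOf_twoSidedSP.midpoint_mem hf hf.roleSwap

lemma symmetricMech_symmetrization (f : Profile n n → Fin n → Fin n → ℝ) :
    SymmetricMech (symmetrization f) := by
  intro p i j
  simp only [symmetrization_apply, pi_midpoint_apply]
  exact midpoint_comm (R := ℝ) (f p i j) (f p.swap j i)

lemma violation_symmetrization_le_max (f : Profile n n → Fin n → Fin n → ℝ) (p : Profile n n) :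
    violation p (symmetrization f p) ≤ max (violation p (f p)) (violation p.swap (f p.swap)) := by
  rw [symmetrization_apply, ← violation_flip]
  exact (convexOn_violation p).le_max_of_mem_segment trivial trivial (midpoint_mem_segment _ _)

lemma iSup_violation_symmetrization_le (f : Profile n n → Fin n → Fin n → ℝ) :
    ⨆ p, violation p (symmetrization f p) ≤ ⨆ p, violation p (f p) := by
  have hbdd : BddAbove (Set.range fun p => violation p (f p)) := (Set.finite_range _).bddAbove
  exact ciSup_le fun p => (violation_symmetrization_le_max f p).trans <|
    max_le (le_ciSup hbdd p) (le_ciSup hbdd p.swap)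

end Symmetrization

/-- Theorem 2 (worst-case): in a balanced market, for any two-sided strategy-proof
randomized matching mechanism `f` there is a two-sided strategy-proof and symmetric
randomized matching mechanism `g` whose worst-case stability violation is no larger. -/
theorem symmetrization_worst_case (n : ℕ) (f : Profile n n → Fin n → Fin n → ℝ)
    (hf : ∀ p, IsRandMatching (f p)) (hsp : TwoSidedSP f) :
    ∃ g : Profile n n → Fin n → Fin n → ℝ,
      (∀ p, IsRandMatching (g p)) ∧ TwoSidedSP g ∧ SymmetricMech g ∧
      (⨆ p : Profile n n, violation p (g p)) ≤ ⨆ p : Profile n n, violation p (f p) :=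
  ⟨symmetrization f, isRandMatching_symmetrization hf, hsp.symmetrization,
    symmetricMech_symmetrization f, iSup_violation_symmetrization_le f⟩
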